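/- arXiv:1401.3807 — 2 statements merged into one kernel-verified Lean document; each statement's English description precedes it below -/
import Mathlib

section
/- For every t ∈ {1,…,n}, the degree of the polynomial det(A) in the variable X_t is at most k − 1. -/
/-!
In the Leibniz expansion of `det A` every term is a signed product of one entry from each column.
Each entry is a coefficient of a product of distinct factors `x - X_s`, at most one of which
involves `X_t`, so it has degree at most one in `X_t`. The last column contributes nothing: it holds
the coefficients of `x^(k-1)` in the monic polynomials `f_i` of degree at most `k - 1`, and these
are constants.
-/

open Polynomial MvPolynomial

/-- The coefficient matrix `A = (a_{i,j})` where
`f_i(x) = ∏_{t ∈ Z i} (x - X_t) = ∑_{j=1}^k a_{i,j} x^{j-1}`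
(with `0`-based index `j`, `a i j` is the coefficient of `x^j` in `f i`). -/
noncomputable def coeffMatrix (F : Type*) [Field F] (n k : ℕ)
    (Z : Fin k → Finset (Fin n)) : Matrix (Fin k) (Fin k) (MvPolynomial (Fin n) F) :=
  Matrix.of fun i j =>
    (∏ t ∈ Z i, (Polynomial.X - Polynomial.C (MvPolynomial.X t) :
        Polynomial (MvPolynomial (Fin n) F))).coeff (j : ℕ)

section CommSemiring

variable {σ R : Type*} [CommSemiring R]

theorem degreeOf_coeff_mul_le {t : σ} {p q : Polynomial (MvPolynomial σ R)} {a b : ℕ}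
    (hp : ∀ d, degreeOf t (p.coeff d) ≤ a) (hq : ∀ d, degreeOf t (q.coeff d) ≤ b) (d : ℕ) :
    degreeOf t ((p * q).coeff d) ≤ a + b := by
  rw [Polynomial.coeff_mul]
  exact (degreeOf_sum_le _ _ _).trans <| Finset.sup_le fun x _ =>
    (degreeOf_mul_le _ _ _).trans (add_le_add (hp x.1) (hq x.2))

theorem degreeOf_coeff_prod_le {ι : Type*} {t : σ} {s : Finset ι}
    {p : ι → Polynomial (MvPolynomial σ R)} {a : ι → ℕ}
    (hp : ∀ i ∈ s, ∀ d, degreeOf t ((p i).coeff d) ≤ a i) (d : ℕ) :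
    degreeOf t ((∏ i ∈ s, p i).coeff d) ≤ ∑ i ∈ s, a i := by
  classical
  induction s using Finset.induction_on generalizing d with
  | empty =>
    rw [Finset.prod_empty, Polynomial.coeff_one]
    split_ifs <;> simp
  | insert i s hi ih =>
    rw [Finset.prod_insert hi, Finset.sum_insert hi]
    exact degreeOf_coeff_mul_le (hp i (Finset.mem_insert_self i s))
      (ih fun j hj => hp j (Finset.mem_insert_of_mem hj)) d

end CommSemiring

section CommRing

variable {σ R : Type*} [CommRing R]

theorem degreeOf_coeff_X_sub_C_le (t : σ) (p : MvPolynomial σ R) (d : ℕ) :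
    degreeOf t ((Polynomial.X - Polynomial.C p).coeff d) ≤ degreeOf t p := by
  rw [Polynomial.coeff_sub, Polynomial.coeff_X, Polynomial.coeff_C]
  refine (degreeOf_sub_le _ _ _).trans (max_le ?_ ?_) <;> split_ifs <;> simp

theorem degreeOf_coeff_prod_X_sub_C_X_le_one (t : σ) (s : Finset σ) (d : ℕ) :
    degreeOf t ((∏ a ∈ s, (Polynomial.X - Polynomial.C (MvPolynomial.X a :
      MvPolynomial σ R))).coeff d) ≤ 1 := by
  classical
  obtain _ | _ := subsingleton_or_nontrivial R
  · simp [Subsingleton.elim _ (0 : MvPolynomial σ R)]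
  calc _ ≤ ∑ a ∈ s, degreeOf t (MvPolynomial.X a : MvPolynomial σ R) :=
        degreeOf_coeff_prod_le (fun a _ => degreeOf_coeff_X_sub_C_le t (MvPolynomial.X a)) d
    _ = if t ∈ s then 1 else 0 := by simp_rw [degreeOf_X, Finset.sum_ite_eq]
    _ ≤ 1 := ite_le_one le_rfl zero_le_one

theorem coeff_prod_X_sub_C_of_card_le {ι : Type*} (s : Finset ι) (r : ι → R) {d : ℕ}
    (hd : s.card ≤ d) :
    (∏ i ∈ s, (Polynomial.X - Polynomial.C (r i))).coeff d = if s.card = d then 1 else 0 := by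
  nontriviality R
  have hdeg := Polynomial.natDegree_finsetProd_X_sub_C_eq_card s r
  split_ifs with h
  · rw [← h, ← hdeg]
    exact Polynomial.monic_prod_X_sub_C r s
  · exact Polynomial.coeff_eq_zero_of_natDegree_lt (hdeg.trans_lt (lt_of_le_of_ne hd h))

theorem degreeOf_det_le_sum {ι : Type*} [Fintype ι] [DecidableEq ι] {t : σ}
    {M : Matrix ι ι (MvPolynomial σ R)} {a : ι → ℕ} (hM : ∀ i j, degreeOf t (M i j) ≤ a j) :
    degreeOf t M.det ≤ ∑ j, a j := by
  rw [Matrix.det_apply']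
  refine (degreeOf_sum_le _ _ _).trans (Finset.sup_le fun τ _ => ?_)
  rw [← map_intCast (MvPolynomial.C : R →+* MvPolynomial σ R)]
  calc _ ≤ degreeOf t (∏ j, M (τ j) j) := degreeOf_C_mul_le _ _ _
    _ ≤ ∑ j, degreeOf t (M (τ j) j) := degreeOf_prod_le _ _ _
    _ ≤ ∑ j, a j := Finset.sum_le_sum fun j _ => hM (τ j) j

theorem degreeOf_det_le_general {k : ℕ} (Z : Fin k → Finset σ) (hZ : ∀ i, (Z i).card < k)
    (t : σ) :
    degreeOf t (Matrix.of fun i j : Fin k => (∏ s ∈ Z i, (Polynomial.X -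
      Polynomial.C (MvPolynomial.X s : MvPolynomial σ R))).coeff (j : ℕ)).det ≤ k - 1 := by
  obtain _ | m := k
  · simp
  refine (degreeOf_det_le_sum (a := Fin.lastCases 0 fun _ => 1) fun i j => ?_).trans_eq
    (by simp [Fin.sum_univ_castSucc])
  rw [Matrix.of_apply]
  induction j using Fin.lastCases with
  | last =>
    rw [Fin.val_last, coeff_prod_X_sub_C_of_card_le _ _ (Nat.lt_succ_iff.mp (hZ i))]
    split_ifs <;> simp
  | cast j => simpa using degreeOf_coeff_prod_X_sub_C_X_le_one t (Z i) j

end CommRing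

/-- The degree of `det A` in each variable `X_t` is at most `k - 1`. -/
theorem degreeOf_det_le (F : Type*) [Field F] (n k : ℕ)
    (hk : 1 ≤ k) (hkn : k ≤ n)
    (Z : Fin k → Finset (Fin n)) (hZ : ∀ i, (Z i).card = k - 1) (t : Fin n) :
    MvPolynomial.degreeOf t (coeffMatrix F n k Z).det ≤ k - 1 := by
  exact degreeOf_det_le_general Z (fun i => (hZ i).trans_lt (Nat.sub_one_lt_of_lt hk)) t
end

section
/- Fix 1 ≤ k ≤ n and a finite field F_q. Suppose that for every family Z_1,…,Z_k of (k−1)-element subsets of {1,…,n} satisfying |⋂_{i∈I} Z_i| ≤ k − |I| for all nonempty I ⊆ {1,…,k}, there exists a k×n matrix G over F_q with G_{i,j} = 0 whenever j ∈ Z_i such that every set of k columns of G is linearly independent. Then for every family R_1,…,R_k of subsets of {1,…,n} satisfying the MDS condition |⋃_{i∈I} R_i| ≥ n − k + |I| for all nonempty I ⊆ {1,…,k}, there exists a k×n matrix G over F_q such that G_{i,j} = 0 whenever j ∉ R_i and every set of k columns of G is linearly independent. (The Simplified GM-MDS Conjecture implies the GM-MDS Conjecture.) -/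
/-!
Passing to the complements `Z i = (R i)ᶜ` turns the MDS condition into the intersection condition
of the simplified conjecture, and shrinking the `R i` only adds zero constraints. So it is enough to
shrink the `R i` to size exactly `d + 1`, where `d = n - k`, while keeping
`d + |I| ≤ |⋃_{i ∈ I} R i|` for all nonempty `I`.

A family that is minimal for inclusion among those with this property has the right sizes. Suppose
`R i` had at least `d + 2` elements, among them `x ≠ y`. By minimality, replacing `R i` by
`S = R i \ {x}` violates the condition at some index set `A ∪ {i}`, and replacing it by
`T = R i \ {y}` violates it at some `B ∪ {i}`. By submodularity, the two violating cardinalities add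
up to at least `|⋃_{j ∈ A ∪ B ∪ {i}} R j| + |(S ∩ T) ∪ ⋃_{j ∈ A ∩ B} R j|`. The first term is at
least `d + |A ∪ B| + 1`, and the second at least `d + |A ∩ B|`, even for `A ∩ B = ∅` because
`|S ∩ T| ≥ d`. So the sum is at least `2 d + |A| + |B| + 1`, whereas the violations bound it by
`2 d + |A| + |B|`.
-/

open Function

section Surplus

variable {ι α : Type*} [DecidableEq α] {d : ℕ} {R : ι → Finset α} {i : ι}

/-- The surplus of the bipartite incidence graph between the indices and the elements of the family
`R` is at least `d`, the surplus (in the terminology of Lovász and Plummer) being the minimum of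
`|⋃_{i ∈ I} R i| - |I|` over nonempty `I`. For `d = n - k` this is the MDS condition. -/
def HasSurplus (d : ℕ) (R : ι → Finset α) : Prop :=
  ∀ I : Finset ι, I.Nonempty → d + I.card ≤ (I.biUnion R).card

lemma HasSurplus.add_one_le_card (hR : HasSurplus d R) (i : ι) : d + 1 ≤ (R i).card := by
  simpa using hR {i} (Finset.singleton_nonempty i)

lemma HasSurplus.card_inf_compl_le [Fintype α] (hR : HasSurplus d R) {I : Finset ι}
    (hI : I.Nonempty) : (I.inf Rᶜ).card ≤ Fintype.card α - (d + I.card) := by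
  have hcompl : I.inf Rᶜ = (I.biUnion R)ᶜ := by
    rw [← Finset.sup_eq_biUnion, Finset.compl_sup]
    rfl
  rw [hcompl, Finset.card_compl]
  exact Nat.sub_le_sub_left (hR I hI) _

lemma card_union_biUnion_submodular [DecidableEq ι] (R : ι → Finset α) (S T : Finset α)
    (A B : Finset ι) :
    ((S ∪ T) ∪ (A ∪ B).biUnion R).card + ((S ∩ T) ∪ (A ∩ B).biUnion R).card ≤
      (S ∪ A.biUnion R).card + (T ∪ B.biUnion R).card := by
  have hunion : (S ∪ T) ∪ (A ∪ B).biUnion R = (S ∪ A.biUnion R) ∪ (T ∪ B.biUnion R) := by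
    rw [Finset.union_biUnion, Finset.union_union_union_comm]
  have hinter : (S ∩ T) ∪ (A ∩ B).biUnion R ⊆ (S ∪ A.biUnion R) ∩ (T ∪ B.biUnion R) :=
    Finset.subset_inter
      (Finset.union_subset_union Finset.inter_subset_left
        (Finset.biUnion_subset_biUnion_of_subset_left R Finset.inter_subset_left))
      (Finset.union_subset_union Finset.inter_subset_right
        (Finset.biUnion_subset_biUnion_of_subset_left R Finset.inter_subset_right))
  rw [hunion, ← Finset.card_union_add_card_inter (S ∪ A.biUnion R)]
  gcongr

lemma biUnion_update_of_notMem [DecidableEq ι] {J : Finset ι} (hi : i ∉ J) (R : ι → Finset α)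
    (S : Finset α) : J.biUnion (update R i S) = J.biUnion R :=
  Finset.biUnion_congr rfl fun _ hj => update_of_ne (ne_of_mem_of_not_mem hj hi) S R

lemma HasSurplus.exists_card_lt_of_not_update [DecidableEq ι] (hR : HasSurplus d R)
    {S : Finset α} (hS : ¬ HasSurplus d (update R i S)) :
    ∃ J : Finset ι, i ∉ J ∧ (S ∪ J.biUnion R).card < d + (J.card + 1) := by
  by_contra! hJ
  refine hS fun I hI => ?_
  by_cases hi : i ∈ I
  · have hnot : i ∉ I.erase i := Finset.notMem_erase i I
    rw [← Finset.insert_erase hi, Finset.card_insert_of_notMem hnot, Finset.biUnion_insert,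
      update_self, biUnion_update_of_notMem hnot]
    exact hJ _ hnot
  · rw [biUnion_update_of_notMem hi]
    exact hR I hI

lemma HasSurplus.add_card_le_card_union_biUnion (hR : HasSurplus d R) {S : Finset α}
    (hS : d ≤ S.card) (J : Finset ι) : d + J.card ≤ (S ∪ J.biUnion R).card := by
  rcases J.eq_empty_or_nonempty with rfl | hJ
  · simpa using hS
  · exact (hR J hJ).trans (Finset.card_le_card Finset.subset_union_right)

lemma HasSurplus.update_or_update [DecidableEq ι] (hR : HasSurplus d R) {S T : Finset α}
    (hunion : R i ⊆ S ∪ T) (hinter : d ≤ (S ∩ T).card) :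
    HasSurplus d (update R i S) ∨ HasSurplus d (update R i T) := by
  by_contra! ⟨hS, hT⟩
  obtain ⟨A, hiA, hA⟩ := hR.exists_card_lt_of_not_update hS
  obtain ⟨B, hiB, hB⟩ := hR.exists_card_lt_of_not_update hT
  have hcup : d + ((A ∪ B).card + 1) ≤ ((S ∪ T) ∪ (A ∪ B).biUnion R).card := by
    have hi : i ∉ A ∪ B := Finset.notMem_union.2 ⟨hiA, hiB⟩
    calc d + ((A ∪ B).card + 1) = d + (insert i (A ∪ B)).card := by
          rw [Finset.card_insert_of_notMem hi]
      _ ≤ ((insert i (A ∪ B)).biUnion R).card := hR _ (Finset.insert_nonempty _ _)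
      _ ≤ ((S ∪ T) ∪ (A ∪ B).biUnion R).card := by
          rw [Finset.biUnion_insert]
          gcongr
  have hcap : d + (A ∩ B).card ≤ ((S ∩ T) ∪ (A ∩ B).biUnion R).card :=
    hR.add_card_le_card_union_biUnion hinter _
  have hsub := card_union_biUnion_submodular R S T A B
  have hcard := Finset.card_union_add_card_inter A B
  omega

lemma HasSurplus.update_erase_or_update_erase [DecidableEq ι] (hR : HasSurplus d R)
    (hi : d + 2 ≤ (R i).card) {x y : α} (hxy : x ≠ y) :
    HasSurplus d (update R i ((R i).erase x)) ∨ HasSurplus d (update R i ((R i).erase y)) := by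
  have hunion : R i ⊆ (R i).erase x ∪ (R i).erase y := by grind
  have hinter : (R i).erase x ∩ (R i).erase y = R i \ {x, y} := by grind
  refine hR.update_or_update hunion ?_
  calc d ≤ (R i).card - ({x, y} : Finset α).card := by
        rw [Finset.card_pair hxy]
        omega
    _ ≤ (R i \ {x, y}).card := Finset.le_card_sdiff _ _
    _ = ((R i).erase x ∩ (R i).erase y).card := by rw [hinter]

lemma card_eq_of_minimal_hasSurplus (hR : Minimal (HasSurplus d) R) (i : ι) :
    (R i).card = d + 1 := by
  classical
  refine le_antisymm ?_ (hR.prop.add_one_le_card i)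
  by_contra! hcard
  have herase : ∀ z ∈ R i, ¬ HasSurplus d (update R i ((R i).erase z)) := fun z hz h =>
    hR.not_prop_of_lt (update_lt_self_iff.2 (Finset.erase_ssubset hz)) h
  obtain ⟨x, hx, y, hy, hxy⟩ := Finset.one_lt_card.1 (show 1 < (R i).card by omega)
  exact (hR.prop.update_erase_or_update_erase hcard hxy).elim (herase x hx) (herase y hy)

lemma HasSurplus.exists_le_card_eq [Finite ι] (hR : HasSurplus d R) :
    ∃ S ≤ R, HasSurplus d S ∧ ∀ i, (S i).card = d + 1 := by
  obtain ⟨S, hSR, hS⟩ := exists_minimal_le_of_wellFoundedLT (HasSurplus d) R hR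
  exact ⟨S, hSR, hS.prop, card_eq_of_minimal_hasSurplus hS⟩

end Surplus

theorem gm_mds_of_simplified_general {ι α M : Type*} [Fintype ι] [Fintype α] [DecidableEq α]
    [Zero M] {k n : ℕ} (hι : Fintype.card ι = k) (hα : Fintype.card α = n) (hkn : k ≤ n)
    (P : Matrix ι α M → Prop)
    (hsimp : ∀ Z : ι → Finset α, (∀ i, (Z i).card = k - 1) →
      (∀ I : Finset ι, I.Nonempty → (I.inf Z).card ≤ k - I.card) →
      ∃ G : Matrix ι α M, (∀ i j, j ∈ Z i → G i j = 0) ∧ P G) :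
    ∀ R : ι → Finset α,
      (∀ I : Finset ι, I.Nonempty → n - k + I.card ≤ (I.biUnion R).card) →
      ∃ G : Matrix ι α M, (∀ i j, j ∉ R i → G i j = 0) ∧ P G := by
  intro R (hR : HasSurplus (n - k) R)
  obtain ⟨S, hSR, hS, hcard⟩ := hR.exists_le_card_eq
  have hcompl : ∀ i, (Sᶜ i).card = k - 1 := fun i => by
    rw [Pi.compl_apply, Finset.card_compl, hcard, hα]
    omega
  have hinf : ∀ I : Finset ι, I.Nonempty → (I.inf Sᶜ).card ≤ k - I.card := fun I hI =>
    (hS.card_inf_compl_le hI).trans (by omega)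
  obtain ⟨G, hG, hPG⟩ := hsimp Sᶜ hcompl hinf
  exact ⟨G, fun i j hj => hG i j (Finset.mem_compl.2 fun hjS => hj (hSR i hjS)), hPG⟩

/-- The Simplified GM-MDS Conjecture implies the GM-MDS Conjecture: if for every family
of `(k-1)`-subsets `Z i` with `|⋂_{i ∈ I} Z i| ≤ k - |I|` (nonempty `I`) there is an MDS
generator matrix vanishing on the positions prescribed by the `Z i`, then for every
family `R i` satisfying the MDS condition `|⋃_{i ∈ I} R i| ≥ n - k + |I|` there is an
MDS generator matrix vanishing outside the positions prescribed by the `R i`. -/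
theorem gm_mds_of_simplified (n k : ℕ) (hk : 1 ≤ k) (hkn : k ≤ n)
    (F : Type*) [Field F] [Fintype F]
    (hsimp : ∀ Z : Fin k → Finset (Fin n), (∀ i, (Z i).card = k - 1) →
      (∀ I : Finset (Fin k), I.Nonempty → (I.inf Z).card ≤ k - I.card) →
      ∃ G : Matrix (Fin k) (Fin n) F,
        (∀ i j, j ∈ Z i → G i j = 0) ∧
        (∀ s : Finset (Fin n), s.card = k →
          LinearIndependent F (fun j : s => (fun i : Fin k => G i (j : Fin n))))) :
    ∀ R : Fin k → Finset (Fin n),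
      (∀ I : Finset (Fin k), I.Nonempty → n - k + I.card ≤ (I.biUnion R).card) →
      ∃ G : Matrix (Fin k) (Fin n) F,
        (∀ i j, j ∉ R i → G i j = 0) ∧
        (∀ s : Finset (Fin n), s.card = k →
          LinearIndependent F (fun j : s => (fun i : Fin k => G i (j : Fin n)))) :=
  gm_mds_of_simplified_general (Fintype.card_fin k) (Fintype.card_fin n) hkn _ hsimp
end
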